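/- Let d ≥ 1 be an integer, σ1, σ2 ∈ ℝ, 0 < q_i ≤ ∞ and 0 < p_i ≤ u_i < ∞ for i = 1, 2. Assume that (σ1 − σ2)/d > (p1/u1)(1/p1 − 1/p2) > max{0, 1/u1 − 1/u2} and moreover (σ1 − σ2)/d > 1/p1 − 1/p2. Then there exist constants c1, c2 > 0 such that for all k ∈ ℕ, c1 · k^{−(σ1−σ2)/d} ≤ e_k(id : ñ^{σ1}_{u1,p1,q1}(Q) → ñ^{σ2}_{u2,p2,q2}(Q)) ≤ c2 · k^{−(σ1−σ2)/d}. -/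

import Mathlib

open scoped ENNReal NNReal

noncomputable section

/-- `Q_{j,m} ⊆ Q = [0,1)^d` iff `0 ≤ m i < 2^j` for every coordinate `i`. -/
def inUnitCube (d j : ℕ) (m : Fin d → ℤ) : Prop :=
  ∀ i, 0 ≤ m i ∧ m i < 2 ^ j

/-- For `ν ≤ j`: `Q_{j,m} ⊆ Q_{ν,k}`. -/
def cubeSub (d j ν : ℕ) (m k : Fin d → ℤ) : Prop :=
  ∀ i, k i * 2 ^ (j - ν) ≤ m i ∧ m i < (k i + 1) * 2 ^ (j - ν)

/-- The finite-dimensional Morrey quasi-norm `‖· | m^{2^{jd}}_{u,p}‖` (`ℝ≥0∞`-valued),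
on coefficients indexed by the `m ∈ ℤ^d` with `Q_{j,m} ⊆ Q` (other coordinates are ignored). -/
def mNorm (d : ℕ) (u p : ℝ) (j : ℕ) (lam : (Fin d → ℤ) → ℂ) : ℝ≥0∞ :=
  ⨆ νk : {νk : ℕ × (Fin d → ℤ) // νk.1 ≤ j ∧ inUnitCube d νk.1 νk.2},
    (2 : ℝ≥0∞) ^ ((d : ℝ) * ((j : ℝ) - (νk.1.1 : ℝ)) * (1 / u - 1 / p)) *
      (∑' m : {m : Fin d → ℤ // cubeSub d j νk.1.1 m νk.1.2},
        ((‖lam m.1‖₊ : ℝ≥0∞)) ^ p) ^ (1 / p)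

/-- The `ℓ_q^{2^{jd}}` quasi-norm (`0 < q < ∞`) on level-`j` coefficients. -/
def lqNorm (d : ℕ) (q : ℝ) (j : ℕ) (lam : (Fin d → ℤ) → ℂ) : ℝ≥0∞ :=
  (∑' m : {m : Fin d → ℤ // inUnitCube d j m}, ((‖lam m.1‖₊ : ℝ≥0∞)) ^ q) ^ (1 / q)

/-- The quasi-norm of the sequence space `ñ^σ_{u,p,q}(Q)`, `q ∈ (0,∞]`. -/
def nNorm (d : ℕ) (σ u p : ℝ) (q : ℝ≥0∞) (lam : ℕ → (Fin d → ℤ) → ℂ) : ℝ≥0∞ :=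
  if q = ∞ then
    ⨆ j : ℕ, (2 : ℝ≥0∞) ^ ((j : ℝ) * (σ - d / u)) * mNorm d u p j (lam j)
  else
    (∑' j : ℕ, ((2 : ℝ≥0∞) ^ ((j : ℝ) * (σ - d / u)) * mNorm d u p j (lam j)) ^ q.toReal) ^
      (1 / q.toReal)

/-- `k`-th entropy number of the identity map between two quasi-norms on one ambient group:
the infimum of all `ε > 0` such that the `N₁`-unit ball is covered by `2^(k-1)` `N₂`-balls of
radius `ε`. -/
def entropyNumber {Λ : Type*} [AddCommGroup Λ] (N₁ N₂ : Λ → ℝ≥0∞) (k : ℕ) : ℝ≥0∞ :=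
  sInf {ε : ℝ≥0∞ | 0 < ε ∧ ∃ c : Fin (2 ^ (k - 1)) → Λ,
    ∀ x : Λ, N₁ x ≤ 1 → ∃ i, N₂ (x - c i) ≤ ε}

/-- Operator quasi-norm of the identity map between two quasi-norms on one ambient space:
the smallest `C` with `N₂ x ≤ C · N₁ x` for all `x`. -/
def opNorm {Λ : Type*} (N₁ N₂ : Λ → ℝ≥0∞) : ℝ≥0∞ :=
  sInf {C : ℝ≥0∞ | ∀ x, N₂ x ≤ C * N₁ x}

end

/-!
Take `J` with `2 ^ (J d) ≈ k`. For the upper bound, the level-`j` coefficients of a point of the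
unit ball are quantized to multiples of a step `2 ^ (t - j σ₁)` by Gaussian integers, those of
modulus below the step being replaced by `0`. The error is bounded both by the step and by the
coefficients themselves, and interpolating between these two bounds, cube by cube, controls its
`(u₂, p₂)`-Morrey norm. The quantized vectors lie in an `ℓ_p₁`-ball, whose lattice points are
counted by Rankin's trick: there are at most `exp (C 2 ^ (j d - θ t))` of them, for any fixed
`θ ∈ (0, p₁)`. With `t` a suitable multiple of `j - J` (a different one on each side of `J`), the
logarithm of the number of centres is at most `k`, and the error at most `k ^ (-(σ₁ - σ₂) / d)`,
up to constants and a factor decaying geometrically in `|j - J|`, so all levels can be combined.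

For the lower bound, fix a level `j` with `2k ≤ 2 ^ (j d) ≲ k`. For sets `A` of cubes of this
level, the vectors `2 ^ (-j σ₁) 1_A` lie in the unit ball, and the same lattice point count shows
that a target ball of radius `δ 2 ^ (-j (σ₁ - σ₂))` contains at most `2 ^ (2 ^ (j d) / 2)` of
these `2 ^ (2 ^ (j d))` vectors.
-/

section EntropyNumber

variable {Λ : Type*} [AddCommGroup Λ] {N₁ N₂ : Λ → ℝ≥0∞} {k : ℕ} {ε : ℝ≥0∞}

/-- `G` is an `ε`-net, with respect to `N₂`, of the unit ball of `N₁`: the covers that bound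
`entropyNumber N₁ N₂` from above. -/
def IsUnitBallNet (N₁ N₂ : Λ → ℝ≥0∞) (ε : ℝ≥0∞) (G : Set Λ) : Prop :=
  ∀ x, N₁ x ≤ 1 → ∃ g ∈ G, N₂ (x - g) ≤ ε

lemma IsUnitBallNet.entropyNumber_le {G : Set Λ} (hnet : IsUnitBallNet N₁ N₂ ε G) (hG : G.Finite)
    (hcard : G.ncard ≤ 2 ^ (k - 1)) (hε : 0 < ε) :
    entropyNumber N₁ N₂ k ≤ ε := by
  have := hG.fintype
  obtain ⟨e⟩ : Nonempty (G ↪ Fin (2 ^ (k - 1))) := by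
    rw [Function.Embedding.nonempty_iff_card_le, Fintype.card_fin]
    rwa [← Nat.card_coe_set_eq, Nat.card_eq_fintype_card] at hcard
  refine sInf_le ⟨hε, Function.extend e Subtype.val 0, fun x hx => ?_⟩
  obtain ⟨g, hg, hxg⟩ := hnet x hx
  exact ⟨e ⟨g, hg⟩, by rwa [e.injective.extend_apply]⟩

lemma le_entropyNumber_of_card_fiber_le {τ : Type*} (S : Finset τ) (v : τ → Λ) {M : ℝ}
    (hv : ∀ A ∈ S, N₁ (v A) ≤ 1)
    (hM : ∀ c, ∀ T ⊆ S, (∀ A ∈ T, N₂ (v A - c) ≤ ε) → (T.card : ℝ) ≤ M)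
    (hS : 2 ^ (k - 1) * M < S.card) : ε ≤ entropyNumber N₁ N₂ k := by
  classical
  refine le_sInf fun r ⟨_, c, hc⟩ => le_of_not_gt fun hr => ?_
  choose! i hi using fun A hA => hc (v A) (hv A hA)
  have hpigeon : (Finset.univ : Finset (Fin (2 ^ (k - 1)))).card • M < S.card := by simpa using hS
  obtain ⟨a, -, ha⟩ := Finset.exists_lt_card_fiber_of_nsmul_lt_card_of_maps_to
    (fun A _ => Finset.mem_univ (i A)) hpigeon
  refine ha.not_ge (hM (c a) _ (Finset.filter_subset _ _) fun A hA => ?_)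
  obtain ⟨hAS, rfl⟩ := Finset.mem_filter.1 hA
  exact (hi A hAS).trans hr.le

end EntropyNumber

section ExpLogTwo

lemma exp_mul_log_two_div_two (x : ℝ) : Real.exp (x * (Real.log 2 / 2)) = 2 ^ (x / 2) := by
  rw [Real.rpow_def_of_pos two_pos]
  ring_nf

lemma le_two_pow_sub_one {n k : ℕ} (hk : 0 < k) (hn : (n : ℝ) ≤ Real.exp (k * (Real.log 2 / 2))) :
    n ≤ 2 ^ (k - 1) := by
  rw [exp_mul_log_two_div_two] at hn
  obtain rfl | hk2 : k = 1 ∨ 2 ≤ k := by omega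
  · have hlt : (n : ℝ) < 2 := hn.trans_lt (Real.rpow_lt_self_of_one_lt one_lt_two (by norm_num))
    have : n < 2 := by exact_mod_cast hlt
    omega
  · have hk2' : (2 : ℝ) ≤ k := by exact_mod_cast hk2
    have hle : (n : ℝ) ≤ 2 ^ ((k : ℝ) - 1) :=
      hn.trans (Real.rpow_le_rpow_of_exponent_le one_le_two (by linarith))
    rw [← Nat.cast_pred hk, Real.rpow_natCast] at hle
    exact_mod_cast hle

lemma two_pow_sub_one_mul_exp_lt {k N : ℕ} (hk : 0 < k) (hkN : 2 * k ≤ N) :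
    2 ^ (k - 1) * Real.exp (N * (Real.log 2 / 2)) < 2 ^ N := by
  have hkN' : 2 * (k : ℝ) ≤ N := by exact_mod_cast hkN
  rw [exp_mul_log_two_div_two, ← Real.rpow_natCast 2 (k - 1), ← Real.rpow_add two_pos,
    ← Real.rpow_natCast 2 N, Nat.cast_pred hk]
  exact Real.rpow_lt_rpow_of_exponent_lt one_lt_two (by linarith)

end ExpLogTwo

section Counting

lemma finite_and_ncard_le {α : Type*} {A : Set α} {B : ℝ}
    (h : ∀ F : Finset α, ↑F ⊆ A → (F.card : ℝ) ≤ B) : A.Finite ∧ (A.ncard : ℝ) ≤ B := by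
  have hfin : A.Finite := by
    by_contra hA
    obtain ⟨F, hF, hcard⟩ := Set.Infinite.exists_subset_card_eq hA (⌊B⌋₊ + 1)
    have hle := h F hF
    rw [hcard, Nat.cast_succ] at hle
    exact hle.not_gt (Nat.lt_floor_add_one B)
  refine ⟨hfin, ?_⟩
  rw [Set.ncard_eq_toFinset_card A hfin]
  exact h _ (by simp)

-- Rankin's trick: every counted `f` has weight `exp (-∑ φ (f i)) ≥ exp (-X)`, and the weights of
-- all functions sum to a power of the one-coordinate sum.
lemma card_le_exp_of_sum_exp_neg_le {ι κ : Type*} [Fintype ι] {φ : κ → ℝ} {E X : ℝ}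
    (hφ : ∀ s : Finset κ, ∑ z ∈ s, Real.exp (-φ z) ≤ Real.exp E) (F : Finset (ι → κ))
    (hF : ∀ f ∈ F, ∑ i, φ (f i) ≤ X) :
    (F.card : ℝ) ≤ Real.exp (Fintype.card ι * E + X) := by
  classical
  let s : Finset κ := F.biUnion fun f => Finset.univ.image f
  have hsub : F ⊆ Fintype.piFinset fun _ : ι => s := fun f hf => Fintype.mem_piFinset.2 fun i =>
    Finset.mem_biUnion.2 ⟨f, hf, Finset.mem_image_of_mem _ (Finset.mem_univ i)⟩
  have hweight : (F.card : ℝ) * Real.exp (-X) ≤ Real.exp E ^ Fintype.card ι :=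
    calc (F.card : ℝ) * Real.exp (-X) = ∑ _f ∈ F, Real.exp (-X) := by
          rw [Finset.sum_const, nsmul_eq_mul]
      _ ≤ ∑ f ∈ F, ∏ i, Real.exp (-φ (f i)) := Finset.sum_le_sum fun _ hf => by
          rw [← Real.exp_sum, Finset.sum_neg_distrib]
          exact Real.exp_le_exp.2 (neg_le_neg (hF _ hf))
      _ ≤ ∑ f ∈ Fintype.piFinset fun _ : ι => s, ∏ i, Real.exp (-φ (f i)) :=
          Finset.sum_le_sum_of_subset_of_nonneg hsub fun _ _ _ => by positivity
      _ = (∑ z ∈ s, Real.exp (-φ z)) ^ Fintype.card ι := by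
          rw [← Finset.card_univ, ← Finset.prod_const, Finset.prod_univ_sum]
      _ ≤ Real.exp E ^ Fintype.card ι := by gcongr; exact hφ s
  rwa [Real.exp_add, Real.exp_nat_mul, ← div_le_iff₀ (Real.exp_pos X), div_eq_mul_inv,
    ← Real.exp_neg]

lemma ncard_pi_le_exp_tsum {α : ℕ → Type*} {A : ∀ j, Set (α j)} {b : ℕ → ℝ} (hb : Summable b)
    (hb0 : ∀ j, 0 ≤ b j) (hA : ∀ j, (A j).Finite)
    (hcard : ∀ j, ((A j).ncard : ℝ) ≤ Real.exp (b j)) :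
    (Set.univ.pi A).Finite ∧ ((Set.univ.pi A).ncard : ℝ) ≤ Real.exp (∑' j, b j) := by
  classical
  obtain ⟨n, hn⟩ := Filter.eventually_atTop.1
    (hb.tendsto_atTop_zero.eventually_lt_const (Real.log_pos one_lt_two))
  -- A bound `exp (b j) < 2` leaves at most one point, so only the coordinates below `n` vary.
  have hsubsingleton : ∀ j, n ≤ j → (A j).Subsingleton := fun j hj => by
    have hlt : ((A j).ncard : ℝ) < 2 :=
      (hcard j).trans_lt ((Real.lt_log_iff_exp_lt two_pos).1 (hn j hj))
    have := (hA j).to_subtype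
    exact Set.ncard_le_one_iff_subsingleton.1 (by
      have : (A j).ncard < 2 := by exact_mod_cast hlt
      omega)
  have hrestrict : Set.InjOn (fun (f : ∀ j, α j) (j : Finset.range n) => f j) (Set.univ.pi A) := by
    intro f hf g hg hfg
    ext j
    by_cases hj : j < n
    · exact congrFun hfg ⟨j, Finset.mem_range.2 hj⟩
    · exact hsubsingleton j (not_lt.1 hj) (hf j trivial) (hg j trivial)
  refine finite_and_ncard_le fun F hF => ?_
  calc (F.card : ℝ) ≤ (Fintype.piFinset fun j : Finset.range n => (hA j).toFinset).card := by
        refine Nat.cast_le.2 (Finset.card_le_card_of_injOn _ (fun f hf => ?_) (hrestrict.mono hF))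
        simpa using fun j _ => hF hf j trivial
    _ = ∏ j ∈ Finset.range n, ((A j).ncard : ℝ) := by
        rw [Fintype.card_piFinset, Nat.cast_prod]
        simp only [← Set.ncard_eq_toFinset_card]
        exact Finset.prod_coe_sort (Finset.range n) fun j => ((A j).ncard : ℝ)
    _ ≤ ∏ j ∈ Finset.range n, Real.exp (b j) :=
        Finset.prod_le_prod (fun _ _ => Nat.cast_nonneg _) fun j _ => hcard j
    _ ≤ Real.exp (∑' j, b j) := by
        rw [← Real.exp_sum]
        exact Real.exp_le_exp.2 (hb.sum_le_tsum _ fun j _ => hb0 j)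

end Counting

section LatticePoints

lemma exp_neg_le_div_rpow {M x : ℝ} (hM : 0 < M) (hx : 0 < x) :
    Real.exp (-x) ≤ (M / x) ^ M := by
  have hle : x / M ≤ Real.exp (x / M) := by linarith [Real.add_one_le_exp (x / M)]
  calc Real.exp (-x) = (Real.exp (x / M))⁻¹ ^ M := by
        rw [← Real.exp_neg, ← Real.exp_mul]
        congr 1
        field_simp
    _ ≤ (x / M)⁻¹ ^ M := by gcongr
    _ = (M / x) ^ M := by rw [inv_div]

lemma one_add_le_exp_rpow_div {η x : ℝ} (hη : 0 < η) (hη1 : η ≤ 1) (hx : 0 ≤ x) :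
    1 + x ≤ Real.exp (x ^ η / η) := by
  have hle : (1 + x) ^ η ≤ Real.exp (x ^ η) :=
    calc (1 + x) ^ η ≤ 1 ^ η + x ^ η := Real.rpow_add_le_add_rpow zero_le_one hx hη.le hη1
      _ ≤ Real.exp (x ^ η) := by rw [Real.one_rpow, add_comm]; exact Real.add_one_le_exp _
  rw [div_eq_mul_inv, Real.exp_mul]
  exact (Real.le_rpow_inv_iff_of_pos (by positivity) (by positivity) hη).2 hle

lemma norm_sub_rpow_le {E : Type*} [SeminormedAddCommGroup E] {p : ℝ} (hp : 0 < p) (x y z : E) :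
    ‖x - y‖ ^ p ≤ 2 ^ p * (‖x - z‖ ^ p + ‖y - z‖ ^ p) := by
  have hmax : ‖x - y‖ ≤ 2 * max ‖x - z‖ ‖y - z‖ := by
    have := norm_sub_le_norm_sub_add_norm_sub x z y
    rw [norm_sub_rev z] at this
    linarith [le_max_left ‖x - z‖ ‖y - z‖, le_max_right ‖x - z‖ ‖y - z‖]
  refine (Real.rpow_le_rpow (norm_nonneg _) hmax hp.le).trans ?_
  rw [Real.mul_rpow two_pos.le (by positivity),
    (Real.monotoneOn_rpow_Ici_of_exponent_nonneg hp.le).map_max (norm_nonneg _) (norm_nonneg _)]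
  gcongr
  exact max_le_add_of_nonneg (by positivity) (by positivity)

variable {E : Type*} [NormedAddCommGroup E] [NormedSpace ℝ E] [FiniteDimensional ℝ E]
  (L : Submodule ℤ E) [DiscreteTopology L] {p : ℝ}

lemma exists_sum_exp_neg_mul_norm_rpow_le (hp : 0 < p) {α : ℝ} (hα : 0 < α) :
    ∃ C : ℝ, 0 ≤ C ∧ ∀ c > 0, ∀ s : Finset L,
      ∑ z ∈ s, Real.exp (-(c * ‖z‖ ^ p)) ≤ Real.exp (C * c ^ (-α)) := by
  classical
  set M : ℝ := α + (Module.finrank ℤ L + 1) / p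
  have hM : 0 < M := by positivity
  have hαM : α ≤ M := le_add_of_nonneg_right (by positivity)
  have hsummable : Summable fun z : L => ‖z‖ ^ (-(p * M)) := ZLattice.summable_norm_rpow L _ (by
    have : p * M = p * α + Module.finrank ℤ L + 1 := by simp only [M]; field_simp; ring
    nlinarith)
  set Z : ℝ := ∑' z : L, ‖z‖ ^ (-(p * M))
  refine ⟨(M ^ M * Z) ^ (α / M) / (α / M), by positivity, fun c hc s => ?_⟩
  have hterm : ∀ z : L, z ≠ 0 →
      Real.exp (-(c * ‖z‖ ^ p)) ≤ (M / c) ^ M * ‖z‖ ^ (-(p * M)) := fun z hz => by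
    have hz0 : 0 < ‖z‖ := norm_pos_iff.2 hz
    refine (exp_neg_le_div_rpow hM (by positivity)).trans_eq ?_
    rw [← div_div, div_eq_mul_inv (M / c), Real.mul_rpow (by positivity) (by positivity),
      ← Real.rpow_neg hz0.le, ← Real.rpow_mul hz0.le, neg_mul]
  calc ∑ z ∈ s, Real.exp (-(c * ‖z‖ ^ p))
      ≤ ∑ z ∈ s, ((if z = 0 then 1 else 0) + (M / c) ^ M * ‖z‖ ^ (-(p * M))) := by
        refine Finset.sum_le_sum fun z _ => ?_
        split_ifs with hz
        · simpa [hz, hp.ne'] using by positivity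
        · simpa using hterm z hz
    _ ≤ 1 + (M / c) ^ M * Z := by
        rw [Finset.sum_add_distrib, ← Finset.mul_sum, Finset.sum_ite_eq']
        gcongr
        · split_ifs <;> norm_num
        · exact hsummable.sum_le_tsum s fun _ _ => by positivity
    _ ≤ Real.exp (((M / c) ^ M * Z) ^ (α / M) / (α / M)) :=
        one_add_le_exp_rpow_div (by positivity) ((div_le_one hM).2 hαM) (by positivity)
    _ = Real.exp ((M ^ M * Z) ^ (α / M) / (α / M) * c ^ (-α)) := by
        rw [Real.div_rpow hM.le hc.le, div_mul_eq_mul_div, div_eq_mul_inv (M ^ M * Z),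
          Real.mul_rpow (by positivity) (by positivity), ← Real.rpow_neg hc.le,
          ← Real.rpow_mul hc.le, neg_mul, mul_div_cancel₀ _ hM.ne', mul_div_right_comm]

lemma exists_ncard_lattice_le {θ : ℝ} (hθ : 0 < θ) (hθp : θ < p) :
    ∃ C : ℝ, 0 < C ∧ ∀ (ι : Type*) [Fintype ι] (R : ℝ), 0 < R →
      {f : ι → L | ∑ i, ‖f i‖ ^ p ≤ Fintype.card ι * R ^ p}.Finite ∧
      ({f : ι → L | ∑ i, ‖f i‖ ^ p ≤ Fintype.card ι * R ^ p}.ncard : ℝ) ≤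
        Real.exp (C * (Fintype.card ι * R ^ θ)) := by
  have hpθ : 0 < p - θ := sub_pos.2 hθp
  obtain ⟨C, hC, htheta⟩ := exists_sum_exp_neg_mul_norm_rpow_le L (hθ.trans hθp) (div_pos hθ hpθ)
  refine ⟨C + 1, by positivity, fun ι _ R hR => finite_and_ncard_le fun F hF => ?_⟩
  have hsum : ∀ f ∈ F, ∑ i, R ^ (θ - p) * ‖f i‖ ^ p ≤ Fintype.card ι * R ^ θ := fun f hf =>
    calc ∑ i, R ^ (θ - p) * ‖f i‖ ^ p = R ^ (θ - p) * ∑ i, ‖f i‖ ^ p := (Finset.mul_sum ..).symm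
      _ ≤ R ^ (θ - p) * (Fintype.card ι * R ^ p) := by gcongr; exact hF hf
      _ = Fintype.card ι * R ^ θ := by
          rw [mul_left_comm, ← Real.rpow_add hR, sub_add_cancel]
  refine (card_le_exp_of_sum_exp_neg_le (htheta _ (by positivity)) F hsum).trans_eq ?_
  rw [← Real.rpow_mul hR.le, show (θ - p) * -(θ / (p - θ)) = θ by field_simp; ring]
  ring_nf

lemma exists_card_lattice_translate_le {θ : ℝ} (hθ : 0 < θ) (hθp : θ < p) :
    ∃ C : ℝ, 0 < C ∧ ∀ (ι : Type*) [Fintype ι] (R : ℝ), 0 < R → ∀ (c : ι → E) (T : Finset (ι → L)),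
      (∀ f ∈ T, ∑ i, ‖f i - c i‖ ^ p ≤ Fintype.card ι * R ^ p) →
      (T.card : ℝ) ≤ Real.exp (C * (Fintype.card ι * R ^ θ)) := by
  have hp : 0 < p := hθ.trans hθp
  obtain ⟨C, hC, hcount⟩ := exists_ncard_lattice_le L hθ hθp
  refine ⟨C * (2 * 2 ^ p⁻¹) ^ θ, by positivity, fun ι _ R hR c T hT => ?_⟩
  rcases T.eq_empty_or_nonempty with rfl | ⟨g, hg⟩
  · simpa using by positivity
  obtain ⟨hfin, hcard⟩ := hcount ι (2 * 2 ^ p⁻¹ * R) (by positivity)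
  have hmaps : Set.MapsTo (· - g) (T : Set (ι → L))
      {f | ∑ i, ‖f i‖ ^ p ≤ Fintype.card ι * (2 * 2 ^ p⁻¹ * R) ^ p} := fun f hf =>
    calc ∑ i, ‖f i - g i‖ ^ p ≤ ∑ i, 2 ^ p * (‖f i - c i‖ ^ p + ‖g i - c i‖ ^ p) :=
          Finset.sum_le_sum fun i _ => norm_sub_rpow_le hp (f i : E) (g i) (c i)
      _ = 2 ^ p * (∑ i, ‖f i - c i‖ ^ p + ∑ i, ‖g i - c i‖ ^ p) := by
          rw [← Finset.mul_sum, Finset.sum_add_distrib]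
      _ ≤ 2 ^ p * (Fintype.card ι * R ^ p + Fintype.card ι * R ^ p) := by
          gcongr
          exacts [hT f hf, hT g hg]
      _ = Fintype.card ι * (2 * 2 ^ p⁻¹ * R) ^ p := by
          rw [Real.mul_rpow (by positivity) hR.le, Real.mul_rpow two_pos.le (by positivity),
            Real.rpow_inv_rpow two_pos.le hp.ne']
          ring
  have hle := Set.ncard_le_ncard_of_injOn _ hmaps (sub_left_injective.injOn) hfin
  rw [Set.ncard_coe_finset] at hle
  refine (Nat.cast_le.2 hle).trans (hcard.trans_eq ?_)
  rw [Real.mul_rpow (by positivity) hR.le]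
  ring_nf

/-- The Gaussian integers as a lattice in `ℂ`; coefficients are quantized to multiples of it. -/
abbrev gaussianLattice : Submodule ℤ ℂ := Submodule.span ℤ (Set.range Complex.basisOneI)

lemma add_mul_I_mem_gaussianLattice (a b : ℤ) : (a + b * Complex.I : ℂ) ∈ gaussianLattice := by
  have hone : (1 : ℂ) ∈ gaussianLattice := Submodule.subset_span ⟨0, by simp⟩
  have hI : Complex.I ∈ gaussianLattice := Submodule.subset_span ⟨1, by simp⟩
  simpa using add_mem (zsmul_mem hone a) (zsmul_mem hI b)

lemma exists_gaussianLattice_norm_sub_le (z : ℂ) : ∃ w : gaussianLattice, ‖z - w‖ ≤ 1 := by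
  refine ⟨⟨_, add_mul_I_mem_gaussianLattice (round z.re) (round z.im)⟩, ?_⟩
  refine (Complex.norm_le_abs_re_add_abs_im _).trans ?_
  have hre := abs_sub_round z.re
  have him := abs_sub_round z.im
  simp only [Complex.sub_re, Complex.sub_im, Complex.add_re, Complex.add_im, Complex.mul_re,
    Complex.mul_im, Complex.intCast_re, Complex.intCast_im, Complex.I_re, Complex.I_im]
  norm_num at hre him ⊢
  linarith

lemma exists_gaussianLattice_threshold {S : ℝ} (hS : 0 < S) (z : ℂ) :
    ∃ w : gaussianLattice, ‖z - S * w‖ ≤ S ∧ ‖z - S * w‖ ≤ ‖z‖ ∧ S * ‖w‖ ≤ 2 * ‖z‖ := by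
  rcases le_total ‖z‖ S with hz | hz
  · exact ⟨0, by simpa using hz⟩
  obtain ⟨w, hw⟩ := exists_gaussianLattice_norm_sub_le (z / S)
  have hscale : ‖z - S * w‖ ≤ S :=
    calc ‖z - S * w‖ = S * ‖z / S - w‖ := by
          rw [← Complex.norm_of_nonneg hS.le, ← norm_mul, Complex.norm_of_nonneg hS.le, mul_sub,
            mul_div_cancel₀ _ (Complex.ofReal_ne_zero.2 hS.ne')]
      _ ≤ S := mul_le_of_le_one_right hS.le hw
  refine ⟨w, hscale, hscale.trans hz, ?_⟩
  calc S * ‖w‖ = ‖z - (z - S * w)‖ := by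
        rw [sub_sub_cancel, norm_mul, Complex.norm_of_nonneg hS.le, Submodule.coe_norm]
    _ ≤ ‖z‖ + ‖z - S * w‖ := norm_sub_le _ _
    _ ≤ 2 * ‖z‖ := by linarith

end LatticePoints

section DyadicCubes

/-- The `m` with `Q_{j,m} ⊆ Q_{ν,k}`, as a finite set; meant for `ν ≤ j`. -/
noncomputable def subcubes (d j ν : ℕ) (k : Fin d → ℤ) : Finset (Fin d → ℤ) :=
  Fintype.piFinset fun i => Finset.Ico (k i * 2 ^ (j - ν)) ((k i + 1) * 2 ^ (j - ν))

/-- The `m` with `Q_{j,m} ⊆ Q = [0,1)^d`, which index the coefficients of level `j`. -/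
noncomputable def unitCubes (d j : ℕ) : Finset (Fin d → ℤ) := subcubes d j 0 0

variable {d j ν : ℕ} {m k : Fin d → ℤ}

lemma mem_subcubes : m ∈ subcubes d j ν k ↔ cubeSub d j ν m k := by
  simp [subcubes, cubeSub]

lemma card_subcubes (hν : ν ≤ j) : ((subcubes d j ν k).card : ℝ) = 2 ^ ((d : ℝ) * (j - ν)) := by
  have hside : ∀ i, ((k i + 1) * 2 ^ (j - ν) - k i * 2 ^ (j - ν)).toNat = 2 ^ (j - ν) := fun i => by
    rw [add_one_mul, add_sub_cancel_left]
    exact_mod_cast Int.toNat_natCast (2 ^ (j - ν))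
  rw [subcubes, Fintype.card_piFinset]
  simp only [Int.card_Ico, hside, Finset.prod_const, Finset.card_univ, Fintype.card_fin]
  rw [mul_comm, Real.rpow_mul two_pos.le, ← Nat.cast_sub hν]
  norm_cast

lemma subcubes_subset_unitCubes (hν : ν ≤ j) (hk : inUnitCube d ν k) :
    subcubes d j ν k ⊆ unitCubes d j := by
  intro m hm
  simp only [unitCubes, mem_subcubes, cubeSub] at hm ⊢
  intro i
  have hpow : (2 : ℤ) ^ j = 2 ^ ν * 2 ^ (j - ν) := by rw [← pow_add, Nat.add_sub_cancel' hν]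
  have hlower : 0 ≤ k i * 2 ^ (j - ν) := mul_nonneg (hk i).1 (by positivity)
  have hupper : (k i + 1) * 2 ^ (j - ν) ≤ (2 : ℤ) ^ j := by
    rw [hpow]
    gcongr
    exact (hk i).2
  simpa using ⟨hlower.trans (hm i).1, (hm i).2.trans_le hupper⟩

lemma card_unitCubes : ((unitCubes d j).card : ℝ) = 2 ^ ((d : ℝ) * j) := by
  simpa [unitCubes] using card_subcubes (k := (0 : Fin d → ℤ)) j.zero_le

lemma tsum_cubeSub (f : (Fin d → ℤ) → ℝ≥0∞) :
    ∑' m : {m // cubeSub d j ν m k}, f m = ∑ m ∈ subcubes d j ν k, f m := by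
  rw [← Finset.tsum_subtype]
  exact Equiv.tsum_eq (Equiv.subtypeEquivRight fun _ => mem_subcubes.symm)
    (fun m : subcubes d j ν k => f m)

end DyadicCubes

section LevelNorm

/-- The contribution of level `j` to the quasi-norm of `ñ^σ_{u,p,q}(Q)`. -/
noncomputable def levelNorm (d : ℕ) (σ u p : ℝ) (j : ℕ) (x : (Fin d → ℤ) → ℂ) : ℝ≥0∞ :=
  2 ^ ((j : ℝ) * (σ - d / u)) * mNorm d u p j x

variable {d : ℕ} {σ u p : ℝ} {j : ℕ}

lemma levelNorm_le_iff (hp : 0 < p) {x : (Fin d → ℤ) → ℂ} {C : ℝ≥0∞} :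
    levelNorm d σ u p j x ≤ C ↔ ∀ ν ≤ j, ∀ k, inUnitCube d ν k →
      ∑ m ∈ subcubes d j ν k, ‖x m‖ₑ ^ p ≤
        2 ^ ((d : ℝ) * (j - ν)) * (C * 2 ^ (d * ν / u - j * σ)) ^ p := by
  have hterm : ∀ ν (y : ℝ≥0∞), 2 ^ ((j : ℝ) * (σ - d / u)) *
      (2 ^ ((d : ℝ) * (j - ν) * (1 / u - 1 / p)) * y ^ (1 / p)) ≤ C ↔
      y ≤ 2 ^ ((d : ℝ) * (j - ν)) * (C * 2 ^ (d * ν / u - j * σ)) ^ p := fun ν y => by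
    rw [← mul_assoc, ← ENNReal.rpow_add _ _ two_ne_zero ENNReal.ofNat_ne_top, one_div p,
      mul_comm _ (y ^ p⁻¹),
      ← ENNReal.le_div_iff_mul_le (.inl (ENNReal.rpow_pos two_pos ENNReal.ofNat_ne_top).ne')
        (.inl (ENNReal.rpow_ne_top_of_ne_zero two_ne_zero ENNReal.ofNat_ne_top)),
      ENNReal.rpow_inv_le_iff hp, div_eq_mul_inv, ← ENNReal.rpow_neg,
      ENNReal.mul_rpow_of_nonneg _ _ hp.le, ENNReal.mul_rpow_of_nonneg _ _ hp.le, mul_left_comm,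
      ← ENNReal.rpow_mul, ← ENNReal.rpow_mul,
      ← ENNReal.rpow_add _ _ two_ne_zero ENNReal.ofNat_ne_top]
    have hexp : -((j : ℝ) * (σ - d / u) + d * (j - ν) * (1 / u - p⁻¹)) * p =
        d * (j - ν) + (d * ν / u - j * σ) * p := by
      field_simp
      ring
    rw [hexp]
  rw [levelNorm, mNorm, ENNReal.mul_iSup, iSup_le_iff, Subtype.forall, Prod.forall]
  simp only [← tsum_cubeSub fun m => ‖x m‖ₑ ^ p, ← hterm, and_imp]
  exact forall_congr' fun _ => forall_comm

lemma sum_unitCubes_le_of_levelNorm_le (hp : 0 < p) {x : (Fin d → ℤ) → ℂ} {δ : ℝ} (hδ : 0 ≤ δ)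
    (hx : levelNorm d σ u p j x ≤ ENNReal.ofReal δ) :
    ∑ m ∈ unitCubes d j, ‖x m‖ ^ p ≤ (unitCubes d j).card * (δ * 2 ^ (-(j * σ))) ^ p := by
  have h := (levelNorm_le_iff hp).1 hx 0 j.zero_le 0 fun i => by simp
  have htwo : ENNReal.ofReal 2 = 2 := ENNReal.ofReal_ofNat 2
  rw [← ENNReal.ofReal_le_ofReal_iff (by positivity),
    ENNReal.ofReal_sum_of_nonneg (fun _ _ => by positivity), card_unitCubes,
    ENNReal.ofReal_mul (by positivity),
    ← ENNReal.ofReal_rpow_of_nonneg (by positivity) hp.le, ENNReal.ofReal_mul hδ,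
    ← ENNReal.ofReal_rpow_of_pos two_pos, ← ENNReal.ofReal_rpow_of_pos two_pos, htwo]
  simpa [unitCubes, ← ENNReal.ofReal_rpow_of_nonneg (norm_nonneg _) hp.le] using h

lemma levelNorm_le_one (hp : 0 < p) (hu : 0 < u) {x : (Fin d → ℤ) → ℂ}
    (hx : ∀ m, ‖x m‖ₑ ≤ 2 ^ (-(j * σ))) : levelNorm d σ u p j x ≤ 1 := by
  refine (levelNorm_le_iff hp).2 fun ν hν k _ => ?_
  calc ∑ m ∈ subcubes d j ν k, ‖x m‖ₑ ^ p
      ≤ ∑ _m ∈ subcubes d j ν k, (2 ^ (d * ν / u - j * σ) : ℝ≥0∞) ^ p := by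
        gcongr
        refine (hx _).trans (ENNReal.rpow_le_rpow_of_exponent_le one_le_two ?_)
        rw [neg_eq_zero_sub]
        gcongr
        positivity
    _ = 2 ^ ((d : ℝ) * (j - ν)) * (1 * 2 ^ (d * ν / u - j * σ)) ^ p := by
        rw [Finset.sum_const, nsmul_eq_mul, one_mul, ← ENNReal.ofReal_natCast, card_subcubes hν,
          ← ENNReal.ofReal_rpow_of_pos two_pos, ENNReal.ofReal_ofNat]

lemma levelNorm_zero (hp : 0 < p) : levelNorm d σ u p j 0 = 0 :=
  nonpos_iff_eq_zero.1 ((levelNorm_le_iff hp).2 fun ν _ k _ => by simp [hp])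

lemma levelNorm_le_of_norm_le {σ₁ σ₂ u₁ u₂ p₁ p₂ : ℝ} (hp₁ : 0 < p₁) (hp : p₁ ≤ p₂)
    (hu : p₁ / u₁ ≤ p₂ / u₂) {t : ℝ} {x y : (Fin d → ℤ) → ℂ}
    (hx : levelNorm d σ₁ u₁ p₁ j x ≤ 1) (hyx : ∀ m ∈ unitCubes d j, ‖y m‖ₑ ≤ ‖x m‖ₑ)
    (hyt : ∀ m ∈ unitCubes d j, ‖y m‖ₑ ≤ 2 ^ (t - j * σ₁)) :
    levelNorm d σ₂ u₂ p₂ j y ≤ 2 ^ (-(j * (σ₁ - σ₂)) + t * (1 - p₁ / p₂)) := by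
  have hp₂ : 0 < p₂ := hp₁.trans_le hp
  refine (levelNorm_le_iff hp₂).2 fun ν hν k hk => ?_
  have hterm : ∀ m ∈ subcubes d j ν k,
      ‖y m‖ₑ ^ p₂ ≤ (2 ^ (t - j * σ₁) : ℝ≥0∞) ^ (p₂ - p₁) * ‖x m‖ₑ ^ p₁ := fun m hm => by
    have hm' := subcubes_subset_unitCubes hν hk hm
    calc ‖y m‖ₑ ^ p₂ = ‖y m‖ₑ ^ (p₂ - p₁) * ‖y m‖ₑ ^ p₁ := by
          rw [← ENNReal.rpow_add_of_nonneg _ _ (sub_nonneg.2 hp) hp₁.le, sub_add_cancel]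
      _ ≤ _ := by
          gcongr
          · exact hyt m hm'
          · exact hyx m hm'
  calc ∑ m ∈ subcubes d j ν k, ‖y m‖ₑ ^ p₂
      ≤ (2 ^ (t - j * σ₁) : ℝ≥0∞) ^ (p₂ - p₁) * ∑ m ∈ subcubes d j ν k, ‖x m‖ₑ ^ p₁ := by
        rw [Finset.mul_sum]
        exact Finset.sum_le_sum hterm
    _ ≤ (2 ^ (t - j * σ₁) : ℝ≥0∞) ^ (p₂ - p₁) *
          (2 ^ ((d : ℝ) * (j - ν)) * (1 * 2 ^ (d * ν / u₁ - j * σ₁)) ^ p₁) := by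
        gcongr
        exact (levelNorm_le_iff hp₁).1 hx ν hν k hk
    _ = 2 ^ ((d : ℝ) * (j - ν)) * 2 ^ (t * (p₂ - p₁) - j * σ₁ * p₂ + d * ν * (p₁ / u₁)) := by
        rw [one_mul, mul_left_comm, ← ENNReal.rpow_mul, ← ENNReal.rpow_mul,
          ← ENNReal.rpow_add _ _ two_ne_zero ENNReal.ofNat_ne_top]
        ring_nf
    _ ≤ 2 ^ ((d : ℝ) * (j - ν)) * 2 ^ (t * (p₂ - p₁) - j * σ₁ * p₂ + d * ν * (p₂ / u₂)) := by
        gcongr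
        exact one_le_two
    _ = _ := by
        rw [← ENNReal.rpow_add (-(j * (σ₁ - σ₂)) + t * (1 - p₁ / p₂)) _ two_ne_zero
          ENNReal.ofNat_ne_top, ← ENNReal.rpow_mul]
        congr 2
        field_simp
        ring

end LevelNorm

section GeometricSums

lemma exists_tsum_two_rpow_neg_mul_abs_sub_le {a : ℝ} (ha : 0 < a) : ∃ C : ℝ, 0 < C ∧ ∀ J : ℤ,
    Summable (fun j : ℕ => (2 : ℝ) ^ (-(a * |(j : ℝ) - J|))) ∧
      ∑' j : ℕ, (2 : ℝ) ^ (-(a * |(j : ℝ) - J|)) ≤ C := by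
  have hnat : Summable fun n : ℕ => (2 : ℝ) ^ (-(a * n)) := by
    refine (summable_geometric_of_lt_one (by positivity)
      (Real.rpow_lt_one_of_one_lt_of_neg one_lt_two (neg_lt_zero.2 ha))).congr fun n => ?_
    rw [← neg_mul, Real.rpow_mul two_pos.le, Real.rpow_natCast]
  let f : ℤ → ℝ := fun i => (2 : ℝ) ^ (-(a * |(i : ℝ)|))
  have hf : Summable f := .of_nat_of_neg (by simpa [f] using hnat) (by simpa [f] using hnat)
  refine ⟨∑' i, f i, hf.tsum_pos (fun _ => by positivity) 0 (by positivity), fun J => ?_⟩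
  have hinj : Function.Injective fun j : ℕ => (j : ℤ) - J := fun i j h => by simpa using h
  have hshift : (fun j : ℕ => (2 : ℝ) ^ (-(a * |(j : ℝ) - J|))) = fun j : ℕ => f (j - J) := by
    simp [f]
  rw [hshift]
  exact ⟨hf.comp_injective hinj, tsum_comp_le_tsum_of_inj hf (fun _ => by positivity) hinj⟩

end GeometricSums

section SequenceNorm

variable {d : ℕ} {σ u p : ℝ} {q : ℝ≥0∞}

lemma levelNorm_le_nNorm (hq : 0 < q) (x : ℕ → (Fin d → ℤ) → ℂ) (j : ℕ) :
    levelNorm d σ u p j (x j) ≤ nNorm d σ u p q x := by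
  rw [nNorm]
  split_ifs with hqtop
  · exact le_iSup (fun j => levelNorm d σ u p j (x j)) j
  · have hq0 : 0 < q.toReal := ENNReal.toReal_pos hq.ne' hqtop
    rw [one_div, ENNReal.le_rpow_inv_iff hq0]
    exact ENNReal.le_tsum (f := fun j => levelNorm d σ u p j (x j) ^ q.toReal) j

lemma exists_nNorm_le_mul (hq : 0 < q) {a : ℝ} (ha : 0 < a) : ∃ C : ℝ, 0 < C ∧
    ∀ (J : ℤ) (D : ℝ≥0∞) (x : ℕ → (Fin d → ℤ) → ℂ),
      (∀ j : ℕ, levelNorm d σ u p j (x j) ≤ D * 2 ^ (-(a * |(j : ℝ) - J|))) →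
      nNorm d σ u p q x ≤ ENNReal.ofReal C * D := by
  rcases eq_or_ne q ∞ with rfl | hqtop
  · refine ⟨1, one_pos, fun J D x hx => ?_⟩
    rw [nNorm, if_pos rfl, ENNReal.ofReal_one, one_mul]
    refine iSup_le fun j => (hx j).trans (mul_le_of_le_one_right' ?_)
    rw [← ENNReal.rpow_zero (x := 2)]
    exact ENNReal.rpow_le_rpow_of_exponent_le one_le_two (neg_nonpos.2 (by positivity))
  have hq0 : 0 < q.toReal := ENNReal.toReal_pos hq.ne' hqtop
  obtain ⟨C, hC, hsum⟩ := exists_tsum_two_rpow_neg_mul_abs_sub_le (mul_pos ha hq0)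
  refine ⟨C ^ q.toReal⁻¹, by positivity, fun J D x hx => ?_⟩
  rw [nNorm, if_neg hqtop, one_div, ENNReal.rpow_inv_le_iff hq0, mul_comm,
    ENNReal.mul_rpow_of_nonneg _ _ hq0.le, ENNReal.ofReal_rpow_of_pos (by positivity),
    Real.rpow_inv_rpow hC.le hq0.ne']
  calc ∑' j : ℕ, levelNorm d σ u p j (x j) ^ q.toReal
      ≤ ∑' j : ℕ, D ^ q.toReal * ENNReal.ofReal (2 ^ (-(a * q.toReal * |(j : ℝ) - J|))) := by
        refine ENNReal.tsum_le_tsum fun j => (ENNReal.rpow_le_rpow (hx j) hq0.le).trans_eq ?_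
        rw [ENNReal.mul_rpow_of_nonneg _ _ hq0.le, ← ENNReal.rpow_mul,
          ← ENNReal.ofReal_rpow_of_pos two_pos, ENNReal.ofReal_ofNat]
        ring_nf
    _ ≤ D ^ q.toReal * ENNReal.ofReal C := by
        rw [ENNReal.tsum_mul_left,
          ← ENNReal.ofReal_tsum_of_nonneg (fun _ => by positivity) (hsum J).1]
        gcongr
        exact (hsum J).2

lemma nNorm_single_le (hq : 0 < q) (hp : 0 < p) (j : ℕ) (x : (Fin d → ℤ) → ℂ) :
    nNorm d σ u p q (Pi.single j x) ≤ levelNorm d σ u p j x := by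
  set X : ℕ → (Fin d → ℤ) → ℂ := Pi.single j x
  have hsame : X j = x := Pi.single_eq_same ..
  have hother : ∀ i ≠ j, levelNorm d σ u p i (X i) = 0 := fun i hi => by
    rw [show X i = 0 from Pi.single_eq_of_ne hi _, levelNorm_zero hp]
  rw [nNorm]
  split_ifs with hqtop
  · refine iSup_le fun i => ?_
    rcases eq_or_ne i j with rfl | hi
    · rw [hsame, levelNorm]
    · exact (hother i hi).trans_le zero_le
  · have hq0 : 0 < q.toReal := ENNReal.toReal_pos hq.ne' hqtop
    rw [one_div, ENNReal.rpow_inv_le_iff hq0]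
    refine (tsum_eq_single j fun i hi => ?_).trans_le ?_
    · rw [← levelNorm, hother i hi, ENNReal.zero_rpow_of_pos hq0]
    · rw [hsame, levelNorm]

end SequenceNorm

section ScaledLatticePoints

variable {d j : ℕ}

/-- The level-`j` coefficients in `S · ℤ[i]` that are `S` times `f` on the cubes contained in `Q`;
they serve as centres of the covering balls and as well-separated points. -/
noncomputable def scaledLatticePoint (S : ℝ) (f : unitCubes d j → gaussianLattice) :
    (Fin d → ℤ) → ℂ :=
  Function.extend Subtype.val (fun m => (S : ℂ) * f m) 0

lemma scaledLatticePoint_apply (S : ℝ) (f : unitCubes d j → gaussianLattice)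
    (m : unitCubes d j) : scaledLatticePoint S f m = S * f m :=
  Subtype.val_injective.extend_apply ..

lemma norm_scaledLatticePoint_le {S : ℝ} (hS : 0 ≤ S) {f : unitCubes d j → gaussianLattice}
    (hf : ∀ m, ‖f m‖ ≤ 1) (m : Fin d → ℤ) : ‖scaledLatticePoint S f m‖ ≤ S := by
  by_cases hm : m ∈ unitCubes d j
  · rw [scaledLatticePoint_apply S f ⟨m, hm⟩, norm_mul, Complex.norm_of_nonneg hS]
    exact mul_le_of_le_one_right hS (hf _)
  · rw [scaledLatticePoint, Function.extend_apply' _ _ _ (by simpa using hm)]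
    simpa using hS

end ScaledLatticePoints

section UpperBound

-- `y` stands for `j - J`, and `t` is a multiple of `y`. The two bounds need its slope to lie
-- between `d / θ₁` and `Δ / r` for `y ≥ 0`, but between `Δ / r` and `d / θ₂` for `y ≤ 0`; hence
-- `θ₁` is chosen close to `p` and `θ₂` close to `0`.
lemma exists_quantization_exponents {d p r Δ : ℝ} (hd : 0 < d) (hp : 0 < p) (hr : 0 < r)
    (hΔ : d * r < p * Δ) :
    ∃ a > 0, ∃ θ₁ ∈ Set.Ioo 0 p, ∃ θ₂ ∈ Set.Ioo 0 p, ∀ y : ℝ, ∃ t : ℝ,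
      (d * y - θ₁ * t ≤ -(a * |y|) ∨ d * y - θ₂ * t ≤ -(a * |y|)) ∧
        r * t - Δ * y ≤ -(a * |y|) := by
  obtain ⟨τ₁, hdτ₁, hτ₁Δ⟩ : ∃ τ, d / p < τ ∧ τ < Δ / r :=
    exists_between (by rw [div_lt_div_iff₀ hp hr]; linarith)
  have hτ₁ : 0 < τ₁ := (by positivity : 0 < d / p).trans hdτ₁
  obtain ⟨θ₁, hdθ₁, hθ₁p⟩ : ∃ θ, d / τ₁ < θ ∧ θ < p :=
    exists_between ((div_lt_comm₀ hp hτ₁).1 hdτ₁)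
  obtain ⟨τ₂, hΔτ₂⟩ := exists_gt (Δ / r)
  have hτ₂ : 0 < τ₂ := hτ₁.trans (hτ₁Δ.trans hΔτ₂)
  obtain ⟨θ₂, hθ₂, hθ₂p⟩ : ∃ θ, 0 < θ ∧ θ < min p (d / τ₂) := exists_between (by positivity)
  rw [lt_min_iff, lt_div_iff₀ hτ₂] at hθ₂p
  rw [lt_div_iff₀ hr] at hτ₁Δ
  rw [div_lt_iff₀ hr] at hΔτ₂
  rw [div_lt_iff₀ hτ₁] at hdθ₁
  obtain ⟨a, ha, ha_lt⟩ : ∃ a, 0 < a ∧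
      a < min (min (θ₁ * τ₁ - d) (Δ - τ₁ * r)) (min (d - θ₂ * τ₂) (τ₂ * r - Δ)) :=
    exists_between (by simp only [lt_min_iff, sub_pos]; exact ⟨⟨hdθ₁, hτ₁Δ⟩, hθ₂p.2, hΔτ₂⟩)
  simp only [lt_min_iff] at ha_lt
  obtain ⟨⟨ha₁, ha₂⟩, ha₃, ha₄⟩ := ha_lt
  have hθ₁ : 0 < θ₁ := pos_of_mul_pos_left (hd.trans hdθ₁) hτ₁.le
  refine ⟨a, ha, θ₁, ⟨hθ₁, hθ₁p⟩, θ₂, ⟨hθ₂, hθ₂p.1⟩, fun y => ?_⟩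
  rcases le_total 0 y with hy | hy
  · refine ⟨τ₁ * y, .inl ?_, ?_⟩ <;> rw [abs_of_nonneg hy] <;> nlinarith
  · refine ⟨τ₂ * y, .inr ?_, ?_⟩ <;> rw [abs_of_nonpos hy] <;> nlinarith

lemma exists_rpow_mul_int_le_lt {b D y : ℝ} (hb : 1 < b) (hD : 0 < D) (hy : 0 < y) :
    ∃ J : ℤ, b ^ (D * J) ≤ y ∧ y < b ^ (D * (J + 1)) := by
  obtain ⟨J, hJ, hJ'⟩ := exists_mem_Ico_zpow hy (Real.one_lt_rpow hb hD)
  refine ⟨J, ?_, ?_⟩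
  · rwa [Real.rpow_mul (by positivity), Real.rpow_intCast]
  · rw [Real.rpow_mul (by positivity)]
    exact_mod_cast hJ'

variable {d : ℕ} {σ₁ σ₂ u₁ u₂ p₁ p₂ : ℝ} {q₁ q₂ : ℝ≥0∞}

lemma levelNorm_sub_scaledLatticePoint_le (hp₁ : 0 < p₁) (hp : p₁ ≤ p₂) (hu : p₁ / u₁ ≤ p₂ / u₂)
    {j : ℕ} {S t : ℝ} {x : (Fin d → ℤ) → ℂ} {f : unitCubes d j → gaussianLattice}
    (hx : levelNorm d σ₁ u₁ p₁ j x ≤ 1)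
    (hft : ∀ m : unitCubes d j, ‖x m - S * f m‖ ≤ 2 ^ (t - j * σ₁))
    (hfx : ∀ m : unitCubes d j, ‖x m - S * f m‖ ≤ ‖x m‖) :
    levelNorm d σ₂ u₂ p₂ j (x - scaledLatticePoint S f) ≤
      2 ^ (-(j * (σ₁ - σ₂)) + t * (1 - p₁ / p₂)) := by
  refine levelNorm_le_of_norm_le hp₁ hp hu hx (fun m hm => ?_) (fun m hm => ?_) <;>
    rw [Pi.sub_apply, scaledLatticePoint_apply S f ⟨m, hm⟩]
  · exact enorm_le_iff_norm_le.2 (hfx ⟨m, hm⟩)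
  · rw [← ofReal_norm, ← ENNReal.ofReal_ofNat 2, ENNReal.ofReal_rpow_of_pos two_pos]
    exact ENNReal.ofReal_le_ofReal (hft ⟨m, hm⟩)

lemma exists_levelNet (hp₁ : 0 < p₁) (hp : p₁ ≤ p₂) (hu : p₁ / u₁ ≤ p₂ / u₂) {θ : ℝ}
    (hθ : θ ∈ Set.Ioo 0 p₁) : ∃ C : ℝ, 0 < C ∧ ∀ (j : ℕ) (t : ℝ), ∃ A : Set ((Fin d → ℤ) → ℂ),
      A.Finite ∧ (A.ncard : ℝ) ≤ Real.exp (C * 2 ^ (d * j - θ * t)) ∧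
      IsUnitBallNet (levelNorm d σ₁ u₁ p₁ j) (levelNorm d σ₂ u₂ p₂ j)
        (2 ^ (-(j * (σ₁ - σ₂)) + t * (1 - p₁ / p₂))) A := by
  obtain ⟨C, hC, hcount⟩ := exists_ncard_lattice_le gaussianLattice hθ.1 hθ.2
  refine ⟨C * 2 ^ θ, by positivity, fun j t => ?_⟩
  set S : ℝ := 2 ^ (t - j * σ₁)
  have hS : 0 < S := by positivity
  have hscale : 2 / S * 2 ^ (-(j * σ₁)) = 2 ^ (1 - t) := by
    rw [div_mul_eq_mul_div, mul_div_assoc, ← Real.rpow_sub two_pos, Real.rpow_sub two_pos 1,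
      Real.rpow_one, div_eq_mul_inv, ← Real.rpow_neg two_pos.le]
    ring_nf
  obtain ⟨hfin, hcard⟩ := hcount (unitCubes d j) (2 ^ (1 - t)) (by positivity)
  refine ⟨scaledLatticePoint S '' _, hfin.image _,
    (Nat.cast_le.2 (Set.ncard_image_le hfin)).trans (hcard.trans_eq ?_), fun x hx => ?_⟩
  · rw [Fintype.card_coe, card_unitCubes, ← Real.rpow_mul two_pos.le, mul_assoc,
      ← Real.rpow_add two_pos, ← Real.rpow_add two_pos]
    ring_nf
  choose f hfS hfx hf2 using fun m : unitCubes d j => exists_gaussianLattice_threshold hS (x m)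
  refine ⟨scaledLatticePoint S f, Set.mem_image_of_mem _ ?_,
    levelNorm_sub_scaledLatticePoint_le hp₁ hp hu hx hfS hfx⟩
  calc ∑ m, ‖f m‖ ^ p₁ ≤ ∑ m : unitCubes d j, (2 / S) ^ p₁ * ‖x m‖ ^ p₁ := by
        gcongr with m
        rw [← Real.mul_rpow (by positivity) (norm_nonneg _), div_mul_eq_mul_div]
        gcongr
        exact (le_div_iff₀' hS).2 (hf2 m)
    _ = (2 / S) ^ p₁ * ∑ m ∈ unitCubes d j, ‖x m‖ ^ p₁ := by
        rw [← Finset.mul_sum, Finset.sum_coe_sort (unitCubes d j) fun m => ‖x m‖ ^ p₁]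
    _ ≤ (2 / S) ^ p₁ * ((unitCubes d j).card * (1 * 2 ^ (-(j * σ₁))) ^ p₁) := by
        gcongr
        exact sum_unitCubes_le_of_levelNorm_le hp₁ zero_le_one (by simpa using hx)
    _ = Fintype.card (unitCubes d j) * (2 ^ (1 - t)) ^ p₁ := by
        rw [mul_left_comm, ← Real.mul_rpow (by positivity) (by positivity), Fintype.card_coe,
          one_mul, hscale]

lemma exists_decaying_levelNet (hd : 0 < d) (hp₁ : 0 < p₁) (hp : p₁ < p₂)
    (hu : p₁ / u₁ ≤ p₂ / u₂) (hσ : d * (1 / p₁ - 1 / p₂) < σ₁ - σ₂) :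
    ∃ a C : ℝ, 0 < a ∧ 0 < C ∧ ∀ (J : ℤ) (j : ℕ), ∃ A : Set ((Fin d → ℤ) → ℂ),
      A.Finite ∧ (A.ncard : ℝ) ≤ Real.exp (C * 2 ^ ((d : ℝ) * J) * 2 ^ (-(a * |(j : ℝ) - J|))) ∧
      IsUnitBallNet (levelNorm d σ₁ u₁ p₁ j) (levelNorm d σ₂ u₂ p₂ j)
        (2 ^ (-((σ₁ - σ₂) * J)) * 2 ^ (-(a * |(j : ℝ) - J|))) A := by
  have hp₂ : 0 < p₂ := hp₁.trans hp
  have hr : 0 < 1 - p₁ / p₂ := sub_pos.2 ((div_lt_one hp₂).2 hp)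
  obtain ⟨a, ha, θ₁, hθ₁, θ₂, hθ₂, hexp⟩ := exists_quantization_exponents (d := d) (Δ := σ₁ - σ₂)
    (Nat.cast_pos.2 hd) hp₁ hr (by
      calc d * (1 - p₁ / p₂) = p₁ * (d * (1 / p₁ - 1 / p₂)) := by field_simp
        _ < p₁ * (σ₁ - σ₂) := by gcongr)
  obtain ⟨C₁, hC₁, hnet₁⟩ := exists_levelNet (d := d) (σ₁ := σ₁) (σ₂ := σ₂) hp₁ hp.le hu hθ₁
  obtain ⟨C₂, -, hnet₂⟩ := exists_levelNet (d := d) (σ₁ := σ₁) (σ₂ := σ₂) hp₁ hp.le hu hθ₂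
  refine ⟨a, max C₁ C₂, ha, by positivity, fun J j => ?_⟩
  obtain ⟨t, ht, hterr⟩ := hexp (j - J)
  have hnet : ∃ θ, d * ((j : ℝ) - J) - θ * t ≤ -(a * |(j : ℝ) - J|) ∧
      ∃ A : Set ((Fin d → ℤ) → ℂ), A.Finite ∧
        (A.ncard : ℝ) ≤ Real.exp (max C₁ C₂ * 2 ^ (d * j - θ * t)) ∧
        IsUnitBallNet (levelNorm d σ₁ u₁ p₁ j) (levelNorm d σ₂ u₂ p₂ j)
          (2 ^ (-(j * (σ₁ - σ₂)) + t * (1 - p₁ / p₂))) A := by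
    rcases ht with ht | ht
    · obtain ⟨A, hA, hcard, hnet⟩ := hnet₁ j t
      exact ⟨θ₁, ht, A, hA, hcard.trans (by gcongr; exact le_max_left ..), hnet⟩
    · obtain ⟨A, hA, hcard, hnet⟩ := hnet₂ j t
      exact ⟨θ₂, ht, A, hA, hcard.trans (by gcongr; exact le_max_right ..), hnet⟩
  obtain ⟨θ, hθ, A, hA, hcard, hnet⟩ := hnet
  refine ⟨A, hA, hcard.trans ?_, fun x hx => ?_⟩
  · rw [mul_assoc, ← Real.rpow_add two_pos]
    gcongr
    · exact one_le_two
    · linarith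
  · obtain ⟨g, hg, hxg⟩ := hnet x hx
    refine ⟨g, hg, hxg.trans ?_⟩
    rw [← ENNReal.rpow_add _ _ two_ne_zero ENNReal.ofNat_ne_top]
    exact ENNReal.rpow_le_rpow_of_exponent_le one_le_two (by linarith)

lemma exists_nNormNet (hd : 0 < d) (hq₁ : 0 < q₁) (hq₂ : 0 < q₂) (hp₁ : 0 < p₁) (hp : p₁ < p₂)
    (hu : p₁ / u₁ ≤ p₂ / u₂) (hσ : d * (1 / p₁ - 1 / p₂) < σ₁ - σ₂) :
    ∃ C C' : ℝ, 0 < C ∧ 0 < C' ∧ ∀ J : ℤ, ∃ G : Set (ℕ → (Fin d → ℤ) → ℂ),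
      G.Finite ∧ (G.ncard : ℝ) ≤ Real.exp (C * 2 ^ ((d : ℝ) * J)) ∧
      IsUnitBallNet (nNorm d σ₁ u₁ p₁ q₁) (nNorm d σ₂ u₂ p₂ q₂)
        (ENNReal.ofReal (C' * 2 ^ (-((σ₁ - σ₂) * J)))) G := by
  obtain ⟨a, C, ha, hC, hlevel⟩ := exists_decaying_levelNet hd hp₁ hp hu hσ
  obtain ⟨Z, hZ, hgeom⟩ := exists_tsum_two_rpow_neg_mul_abs_sub_le ha
  obtain ⟨C', hC', hnorm⟩ := exists_nNorm_le_mul (d := d) (σ := σ₂) (u := u₂) (p := p₂) hq₂ ha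
  refine ⟨C * Z, C', by positivity, hC', fun J => ?_⟩
  choose A hA hcard hnet using hlevel J
  obtain ⟨hfin, hpi⟩ := ncard_pi_le_exp_tsum ((hgeom J).1.mul_left (C * 2 ^ ((d : ℝ) * J)))
    (fun _ => by positivity) hA hcard
  refine ⟨Set.univ.pi A, hfin, hpi.trans (Real.exp_le_exp.2 ?_), fun x hx => ?_⟩
  · calc ∑' j : ℕ, C * 2 ^ ((d : ℝ) * J) * 2 ^ (-(a * |(j : ℝ) - J|))
        = C * 2 ^ ((d : ℝ) * J) * ∑' j : ℕ, 2 ^ (-(a * |(j : ℝ) - J|)) := tsum_mul_left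
      _ ≤ C * 2 ^ ((d : ℝ) * J) * Z := by gcongr; exact (hgeom J).2
      _ = C * Z * 2 ^ ((d : ℝ) * J) := by ring
  · choose g hgA hg using fun j => hnet j (x j) ((levelNorm_le_nNorm hq₁ x j).trans hx)
    refine ⟨g, fun j _ => hgA j, (hnorm J _ (x - g) hg).trans_eq ?_⟩
    rw [ENNReal.ofReal_mul hC'.le, ← ENNReal.ofReal_rpow_of_pos two_pos, ENNReal.ofReal_ofNat]

lemma exists_entropyNumber_nNorm_le (hd : 0 < d) (hq₁ : 0 < q₁) (hq₂ : 0 < q₂) (hp₁ : 0 < p₁)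
    (hp : p₁ < p₂) (hu : p₁ / u₁ ≤ p₂ / u₂) (hσ : d * (1 / p₁ - 1 / p₂) < σ₁ - σ₂) :
    ∃ c : ℝ, 0 < c ∧ ∀ k : ℕ, 0 < k →
      entropyNumber (nNorm d σ₁ u₁ p₁ q₁) (nNorm d σ₂ u₂ p₂ q₂) k ≤
        ENNReal.ofReal (c * (k : ℝ) ^ (-(σ₁ - σ₂) / d)) := by
  have hd' : (0 : ℝ) < d := Nat.cast_pos.2 hd
  have hΔ : 0 < σ₁ - σ₂ := lt_of_le_of_lt (mul_nonneg hd'.le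
    (sub_nonneg.2 (one_div_le_one_div_of_le hp₁ hp.le))) hσ
  obtain ⟨C, C', hC, hC', hnet⟩ :=
    exists_nNormNet (q₁ := q₁) (q₂ := q₂) hd hq₁ hq₂ hp₁ hp hu hσ
  set c₀ : ℝ := Real.log 2 / 2 / C
  have hc₀ : 0 < c₀ := div_pos (half_pos (Real.log_pos one_lt_two)) hC
  refine ⟨C' * (2 ^ (σ₁ - σ₂) * c₀ ^ (-(σ₁ - σ₂) / d)), by positivity, fun k hk => ?_⟩
  have hk' : (0 : ℝ) < k := Nat.cast_pos.2 hk
  obtain ⟨J, hJle, hJlt⟩ := exists_rpow_mul_int_le_lt one_lt_two hd' (mul_pos hc₀ hk')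
  obtain ⟨G, hG, hcard, hGnet⟩ := hnet J
  have hcard' : G.ncard ≤ 2 ^ (k - 1) := le_two_pow_sub_one hk (hcard.trans (Real.exp_le_exp.2 (by
    calc C * 2 ^ ((d : ℝ) * J) ≤ C * (c₀ * k) := by gcongr
      _ = k * (Real.log 2 / 2) := by simp only [c₀]; field_simp)))
  refine (hGnet.entropyNumber_le hG hcard' (by positivity)).trans (ENNReal.ofReal_le_ofReal ?_)
  rw [mul_assoc, mul_assoc, ← Real.mul_rpow hc₀.le hk'.le]
  gcongr
  calc (2 : ℝ) ^ (-((σ₁ - σ₂) * J))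
      = 2 ^ (σ₁ - σ₂) * (2 ^ ((d : ℝ) * (J + 1))) ^ (-(σ₁ - σ₂) / d) := by
        rw [← Real.rpow_mul two_pos.le, ← Real.rpow_add two_pos]
        congr 1
        field_simp
        ring
    _ ≤ 2 ^ (σ₁ - σ₂) * (c₀ * k) ^ (-(σ₁ - σ₂) / d) := by
        refine mul_le_mul_of_nonneg_left ?_ (by positivity)
        exact Real.rpow_le_rpow_of_nonpos (by positivity) hJlt.le
          (div_nonpos_of_nonpos_of_nonneg (neg_nonpos.2 hΔ.le) hd'.le)

end UpperBound

section LowerBound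

variable {d : ℕ} {σ₁ σ₂ u₁ u₂ p₁ p₂ : ℝ} {q₁ q₂ : ℝ≥0∞}

lemma nNorm_single_scaledLatticePoint_le_one (hp : 0 < p₁) (hu : 0 < u₁) (hq : 0 < q₁) {j : ℕ}
    {f : unitCubes d j → gaussianLattice} (hf : ∀ m, ‖f m‖ ≤ 1) :
    nNorm d σ₁ u₁ p₁ q₁ (Pi.single j (scaledLatticePoint (2 ^ (-(j * σ₁))) f)) ≤ 1 := by
  refine (nNorm_single_le hq hp j _).trans (levelNorm_le_one hp hu fun m => ?_)
  rw [← ofReal_norm, ← ENNReal.ofReal_ofNat 2, ENNReal.ofReal_rpow_of_pos two_pos]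
  exact ENNReal.ofReal_le_ofReal (norm_scaledLatticePoint_le (by positivity) hf m)

lemma sum_norm_sub_rpow_le_of_nNorm_single_sub_le (hp : 0 < p₂) (hq : 0 < q₂) {j : ℕ} {δ S : ℝ}
    (hδ : 0 ≤ δ) (hS : 0 < S) (f : unitCubes d j → gaussianLattice) (c : ℕ → (Fin d → ℤ) → ℂ)
    (h : nNorm d σ₂ u₂ p₂ q₂ (Pi.single j (scaledLatticePoint S f) - c) ≤
      ENNReal.ofReal (δ * (S * 2 ^ (j * σ₂)))) :
    ∑ m, ‖f m - c j m / S‖ ^ p₂ ≤ Fintype.card (unitCubes d j) * δ ^ p₂ := by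
  have hlevel := sum_unitCubes_le_of_levelNorm_le hp (by positivity)
    ((levelNorm_le_nNorm hq _ j).trans h)
  have hradius : δ * (S * 2 ^ (j * σ₂)) * 2 ^ (-(j * σ₂)) = S * δ := by
    rw [Real.rpow_neg two_pos.le]
    field_simp
  have hterm : ∀ m : unitCubes d j, ‖scaledLatticePoint S f m - c j m‖ ^ p₂ =
      S ^ p₂ * ‖f m - c j m / S‖ ^ p₂ := fun m => by
    rw [← Real.mul_rpow hS.le (norm_nonneg _), ← Complex.norm_of_nonneg hS.le, ← norm_mul,
      Complex.norm_of_nonneg hS.le, mul_sub, mul_div_cancel₀ _ (Complex.ofReal_ne_zero.2 hS.ne'),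
      scaledLatticePoint_apply]
  rw [hradius, Real.mul_rpow hS.le hδ, mul_left_comm, Pi.sub_apply, Pi.single_eq_same,
    ← Finset.sum_coe_sort] at hlevel
  simp only [Pi.sub_apply, hterm, ← Finset.mul_sum] at hlevel
  rw [Fintype.card_coe]
  exact le_of_mul_le_mul_left hlevel (by positivity)

lemma exists_le_entropyNumber_of_two_mul_le (hq₁ : 0 < q₁) (hq₂ : 0 < q₂) (hp₁ : 0 < p₁)
    (hp₂ : 0 < p₂) (hu₁ : 0 < u₁) :
    ∃ δ : ℝ, 0 < δ ∧ ∀ j k : ℕ, 0 < k → 2 * (k : ℝ) ≤ 2 ^ ((d : ℝ) * j) →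
      ENNReal.ofReal (δ * 2 ^ (-(j * (σ₁ - σ₂)))) ≤
        entropyNumber (nNorm d σ₁ u₁ p₁ q₁) (nNorm d σ₂ u₂ p₂ q₂) k := by
  obtain ⟨C, hC, hcount⟩ :=
    exists_card_lattice_translate_le gaussianLattice (half_pos hp₂) (half_lt_self hp₂)
  set a : ℝ := Real.log 2 / 2 / C
  have ha : 0 < a := div_pos (half_pos (Real.log_pos one_lt_two)) hC
  refine ⟨a ^ (p₂ / 2)⁻¹, by positivity, fun j k hk hkj => ?_⟩
  let e : gaussianLattice := ⟨1, by simpa using add_mul_I_mem_gaussianLattice 1 0⟩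
  have he : ‖e‖ = 1 := norm_one (α := ℂ)
  have hS : (2 : ℝ) ^ (-(j * (σ₁ - σ₂))) = 2 ^ (-(j * σ₁)) * 2 ^ (j * σ₂) := by
    rw [← Real.rpow_add two_pos]
    ring_nf
  rw [hS]
  refine le_entropyNumber_of_card_fiber_le
    (Fintype.piFinset fun _ : unitCubes d j => {0, e})
    (fun f => Pi.single j (scaledLatticePoint (2 ^ (-(j * σ₁))) f))
    (fun f hf => nNorm_single_scaledLatticePoint_le_one hp₁ hu₁ hq₁ fun m => ?_)
    (fun c T _ hT => hcount (unitCubes d j) _ (by positivity) _ T fun f hf =>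
      sum_norm_sub_rpow_le_of_nNorm_single_sub_le hp₂ hq₂ (by positivity) (by positivity) f c
        (hT f hf)) ?_
  · rcases Finset.mem_insert.1 (Fintype.mem_piFinset.1 hf m) with h | h
    · simp [h]
    · rw [Finset.mem_singleton.1 h, he]
  · have h0e : (0 : gaussianLattice) ≠ e := fun h => by simp [← h] at he
    have hkN : 2 * k ≤ Fintype.card (unitCubes d j) := by
      rw [← card_unitCubes, ← Fintype.card_coe] at hkj
      exact_mod_cast hkj
    rw [Real.rpow_inv_rpow ha.le (half_pos hp₂).ne', mul_left_comm, mul_div_cancel₀ _ hC.ne']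
    simpa [h0e] using two_pow_sub_one_mul_exp_lt hk hkN

lemma exists_le_entropyNumber_nNorm (hd : 0 < d) (hσ : σ₂ ≤ σ₁) (hq₁ : 0 < q₁) (hq₂ : 0 < q₂)
    (hp₁ : 0 < p₁) (hp₂ : 0 < p₂) (hu₁ : 0 < u₁) :
    ∃ c : ℝ, 0 < c ∧ ∀ k : ℕ, 0 < k → ENNReal.ofReal (c * (k : ℝ) ^ (-(σ₁ - σ₂) / d)) ≤
      entropyNumber (nNorm d σ₁ u₁ p₁ q₁) (nNorm d σ₂ u₂ p₂ q₂) k := by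
  have hd' : (0 : ℝ) < d := Nat.cast_pos.2 hd
  obtain ⟨δ, hδ, hle⟩ := exists_le_entropyNumber_of_two_mul_le (d := d) (σ₁ := σ₁) (σ₂ := σ₂)
    (u₂ := u₂) hq₁ hq₂ hp₁ hp₂ hu₁
  refine ⟨δ * (2 ^ d * 2) ^ (-(σ₁ - σ₂) / d), by positivity, fun k hk => ?_⟩
  have hk1 : (1 : ℝ) ≤ k := Nat.one_le_cast.2 hk
  obtain ⟨n, hn, hn'⟩ : ∃ n : ℕ, ((2 : ℝ) ^ d) ^ n ≤ 2 * k ∧ 2 * (k : ℝ) < (2 ^ d) ^ (n + 1) :=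
    exists_nat_pow_near (by linarith) (one_lt_pow₀ one_lt_two hd.ne')
  have hpow : (2 : ℝ) ^ ((d : ℝ) * (n + 1 : ℕ)) = (2 ^ d) ^ (n + 1) := by
    rw [← pow_mul]
    exact_mod_cast Real.rpow_natCast 2 _
  refine le_trans (ENNReal.ofReal_le_ofReal ?_) (hle (n + 1) k hk (hn'.le.trans_eq hpow.symm))
  rw [mul_assoc, ← Real.mul_rpow (by positivity) (by positivity)]
  gcongr
  calc (2 ^ d * 2 * (k : ℝ)) ^ (-(σ₁ - σ₂) / d)
      ≤ (2 ^ ((d : ℝ) * (n + 1 : ℕ))) ^ (-(σ₁ - σ₂) / d) := by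
        refine Real.rpow_le_rpow_of_nonpos (by positivity) ?_
          (div_nonpos_of_nonpos_of_nonneg (by linarith) hd'.le)
        rw [hpow, pow_succ', mul_assoc]
        gcongr
    _ = 2 ^ (-((n + 1 : ℕ) * (σ₁ - σ₂))) := by
        rw [← Real.rpow_mul two_pos.le]
        congr 1
        field_simp

end LowerBound

lemma lt_and_div_le_div_of_max_lt {p₁ p₂ u₁ u₂ : ℝ} (hp₁ : 0 < p₁) (hu₁ : 0 < u₁) (hp₂ : 0 < p₂)
    (hu₂ : 0 < u₂) (h : max 0 (1 / u₁ - 1 / u₂) < p₁ / u₁ * (1 / p₁ - 1 / p₂)) :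
    p₁ < p₂ ∧ p₁ / u₁ ≤ p₂ / u₂ := by
  obtain ⟨h0, hu⟩ := max_lt_iff.1 h
  refine ⟨(one_div_lt_one_div hp₂ hp₁).1
    (sub_pos.1 (pos_of_mul_pos_right h0 (by positivity))), ?_⟩
  have hdiff : p₂ / u₂ - p₁ / u₁ = p₂ * (p₁ / u₁ * (1 / p₁ - 1 / p₂) - (1 / u₁ - 1 / u₂)) := by
    field_simp
    ring
  exact sub_nonneg.1 (hdiff ▸ mul_nonneg hp₂.le (sub_nonneg.2 hu.le))

theorem stmt2_general (d : ℕ) (σ1 σ2 u1 p1 u2 p2 : ℝ) (q1 q2 : ℝ≥0∞) (hd : 0 < d)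
    (hq1 : 0 < q1) (hq2 : 0 < q2) (hp1 : 0 < p1) (hu1 : 0 < u1) (hp : p1 < p2)
    (hu : p1 / u1 ≤ p2 / u2) (hσ : 1 / p1 - 1 / p2 < (σ1 - σ2) / d) :
    ∃ c1 c2 : ℝ, 0 < c1 ∧ 0 < c2 ∧ ∀ k : ℕ, 0 < k →
      ENNReal.ofReal (c1 * (k : ℝ) ^ (-(σ1 - σ2) / d)) ≤
          entropyNumber (nNorm d σ1 u1 p1 q1) (nNorm d σ2 u2 p2 q2) k ∧
        entropyNumber (nNorm d σ1 u1 p1 q1) (nNorm d σ2 u2 p2 q2) k ≤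
          ENNReal.ofReal (c2 * (k : ℝ) ^ (-(σ1 - σ2) / d)) := by
  have hd' : (0 : ℝ) < d := Nat.cast_pos.2 hd
  rw [lt_div_iff₀' hd'] at hσ
  have hσ' : 0 < σ1 - σ2 :=
    (mul_pos hd' (sub_pos.2 (one_div_lt_one_div_of_lt hp1 hp))).trans hσ
  obtain ⟨c1, hc1, hlower⟩ := exists_le_entropyNumber_nNorm (u₂ := u2) hd (sub_pos.1 hσ').le
    hq1 hq2 hp1 (hp1.trans hp) hu1
  obtain ⟨c2, hc2, hupper⟩ := exists_entropyNumber_nNorm_le hd hq1 hq2 hp1 hp hu hσ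
  exact ⟨c1, c2, hc1, hc2, fun k hk => ⟨hlower k hk, hupper k hk⟩⟩

theorem stmt2 (d : ℕ) (hd : 1 ≤ d) (σ1 σ2 u1 p1 u2 p2 : ℝ) (q1 q2 : ℝ≥0∞)
    (hq1 : 0 < q1) (hq2 : 0 < q2)
    (hp1 : 0 < p1) (hp1u1 : p1 ≤ u1) (hp2 : 0 < p2) (hp2u2 : p2 ≤ u2)
    (h1 : (σ1 - σ2) / d > p1 / u1 * (1 / p1 - 1 / p2))
    (h2 : p1 / u1 * (1 / p1 - 1 / p2) > max 0 (1 / u1 - 1 / u2))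
    (h3 : (σ1 - σ2) / d > 1 / p1 - 1 / p2) :
    ∃ c1 c2 : ℝ, 0 < c1 ∧ 0 < c2 ∧ ∀ k : ℕ, 0 < k →
      ENNReal.ofReal (c1 * (k : ℝ) ^ (-(σ1 - σ2) / d)) ≤
          entropyNumber (nNorm d σ1 u1 p1 q1) (nNorm d σ2 u2 p2 q2) k ∧
        entropyNumber (nNorm d σ1 u1 p1 q1) (nNorm d σ2 u2 p2 q2) k ≤
          ENNReal.ofReal (c2 * (k : ℝ) ^ (-(σ1 - σ2) / d)) := by
  have hu1 : 0 < u1 := hp1.trans_le hp1u1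
  obtain ⟨hp, hu⟩ := lt_and_div_le_div_of_max_lt hp1 hu1 hp2 (hp2.trans_le hp2u2) h2
  exact stmt2_general d σ1 σ2 u1 p1 u2 p2 q1 q2 hd hq1 hq2 hp1 hu1 hp hu h3
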